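/- arXiv:1010.3492 — 2 statements merged into one kernel-verified Lean document; each statement's English description precedes it below -/
import Mathlib

section
/- Let α ∈ ℂ, b ∈ ℝ, i = √(−1), and let x_i, J_i be the spherical realization on the domain 0 < θ < π/2 (so that x₃ = cos θ > 0 and sin θ ≠ 0). Define the (complex-valued) Goryachev integrals H₁ = J₁² + J₂² + (4/3)J₃² + 2iα x₁ x₃^{−2/3} − b x₃^{−2/3} and H₂ = (2J₃/3)·(J₁² + J₂² + (8/9)J₃² − b x₃^{−2/3}) − 2iα x₃^{1/3} J₁ + (4iα/3) x₃^{−2/3} x₁ J₃. Then {H₁, H₂} = 0 with respect to the canonical Poisson bracket. -/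
open Real Complex

/-- Partial derivative of a complex-valued function in the `i`-th coordinate
direction on `ℝ⁴` (coordinates `z 0 = φ`, `z 1 = θ`, `z 2 = p_φ`, `z 3 = p_θ`). -/
noncomputable def pdC (i : Fin 4) (F : (Fin 4 → ℝ) → ℂ) (z : Fin 4 → ℝ) : ℂ :=
  fderiv ℝ F z (Pi.single i 1)

/-- The canonical Poisson bracket, extended ℂ-bilinearly to complex-valued functions. -/
noncomputable def pbC (F G : (Fin 4 → ℝ) → ℂ) (z : Fin 4 → ℝ) : ℂ :=
  pdC 0 F z * pdC 2 G z - pdC 2 F z * pdC 0 G z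
    + pdC 1 F z * pdC 3 G z - pdC 3 F z * pdC 1 G z

noncomputable def x1 (z : Fin 4 → ℝ) : ℝ := Real.sin (z 0) * Real.sin (z 1)
noncomputable def x3 (z : Fin 4 → ℝ) : ℝ := Real.cos (z 1)
noncomputable def J1 (z : Fin 4 → ℝ) : ℝ :=
  Real.sin (z 0) * Real.cos (z 1) / Real.sin (z 1) * z 2 - Real.cos (z 0) * z 3
noncomputable def J2 (z : Fin 4 → ℝ) : ℝ :=
  Real.cos (z 0) * Real.cos (z 1) / Real.sin (z 1) * z 2 + Real.sin (z 0) * z 3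
noncomputable def J3 (z : Fin 4 → ℝ) : ℝ := -(z 2)

/-- The Goryachev Hamiltonian
`H₁ = J₁² + J₂² + (4/3)J₃² + 2iα x₁ x₃^{−2/3} − b x₃^{−2/3}`. -/
noncomputable def H1gor (α : ℂ) (b : ℝ) (z : Fin 4 → ℝ) : ℂ :=
  ((J1 z ^ 2 + J2 z ^ 2 + (4 / 3) * J3 z ^ 2 - b * x3 z ^ (-(2 : ℝ) / 3) : ℝ) : ℂ)
    + 2 * Complex.I * α * ((x1 z * x3 z ^ (-(2 : ℝ) / 3) : ℝ) : ℂ)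

/-- The Goryachev second integral
`H₂ = (2J₃/3)(J₁² + J₂² + (8/9)J₃² − b x₃^{−2/3}) − 2iα x₃^{1/3} J₁ + (4iα/3) x₃^{−2/3} x₁ J₃`. -/
noncomputable def H2gor (α : ℂ) (b : ℝ) (z : Fin 4 → ℝ) : ℂ :=
  (((2 * J3 z / 3) * (J1 z ^ 2 + J2 z ^ 2 + (8 / 9) * J3 z ^ 2
      - b * x3 z ^ (-(2 : ℝ) / 3)) : ℝ) : ℂ)
    - 2 * Complex.I * α * ((x3 z ^ ((1 : ℝ) / 3) * J1 z : ℝ) : ℂ)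
    + (4 * Complex.I * α / 3) * ((x3 z ^ (-(2 : ℝ) / 3) * x1 z * J3 z : ℝ) : ℂ)

/-- `f` has real gradient `g` at `z`. -/
def HasGrad (f : (Fin 4 → ℝ) → ℝ) (g : Fin 4 → ℝ) (z : Fin 4 → ℝ) : Prop :=
  ∃ L : (Fin 4 → ℝ) →L[ℝ] ℝ, HasFDerivAt f L z ∧ ∀ i, L (Pi.single i 1) = g i

theorem HasGrad.congr {f : (Fin 4 → ℝ) → ℝ} {g g' z : Fin 4 → ℝ} (h : HasGrad f g z)
    (e : ∀ i, g i = g' i) : HasGrad f g' z := by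
  obtain ⟨L, h1, h2⟩ := h
  exact ⟨L, h1, fun i => (h2 i).trans (e i)⟩

theorem hasGrad_coord (j : Fin 4) (z : Fin 4 → ℝ) :
    HasGrad (fun w => w j) (fun i => if i = j then 1 else 0) z := by
  refine ⟨ContinuousLinearMap.proj j, hasFDerivAt_apply j z, fun i => ?_⟩
  simp [Pi.single_apply, eq_comm]

theorem HasGrad.add {f f' : (Fin 4 → ℝ) → ℝ} {g g' z : Fin 4 → ℝ} (h : HasGrad f g z)
    (h' : HasGrad f' g' z) : HasGrad (fun w => f w + f' w) (fun i => g i + g' i) z := by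
  obtain ⟨L, h1, h2⟩ := h
  obtain ⟨L', h1', h2'⟩ := h'
  exact ⟨L + L', h1.add h1', fun i => by simp [h2, h2']⟩

theorem HasGrad.mul {f f' : (Fin 4 → ℝ) → ℝ} {g g' z : Fin 4 → ℝ} (h : HasGrad f g z)
    (h' : HasGrad f' g' z) :
    HasGrad (fun w => f w * f' w) (fun i => f z * g' i + f' z * g i) z := by
  obtain ⟨L, h1, h2⟩ := h
  obtain ⟨L', h1', h2'⟩ := h'
  exact ⟨f z • L' + f' z • L, h1.mul h1', fun i => by simp [h2, h2']⟩

theorem HasGrad.const_mul {f : (Fin 4 → ℝ) → ℝ} {g z : Fin 4 → ℝ} (c : ℝ)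
    (h : HasGrad f g z) : HasGrad (fun w => c * f w) (fun i => c * g i) z := by
  obtain ⟨L, h1, h2⟩ := h
  exact ⟨c • L, h1.const_mul c, fun i => by simp [h2]⟩

theorem HasGrad.comp {f : (Fin 4 → ℝ) → ℝ} {g z : Fin 4 → ℝ} {u : ℝ → ℝ} {u' : ℝ}
    (h : HasGrad f g z) (hu : HasDerivAt u u' (f z)) :
    HasGrad (fun w => u (f w)) (fun i => u' * g i) z := by
  obtain ⟨L, h1, h2⟩ := h
  exact ⟨u' • L, hu.comp_hasFDerivAt z h1, fun i => by simp [h2]⟩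

theorem pdC_combo {A B C : (Fin 4 → ℝ) → ℝ} {a b c z : Fin 4 → ℝ} (hA : HasGrad A a z)
    (hB : HasGrad B b z) (hC : HasGrad C c z) (k l : ℂ)
    {F : (Fin 4 → ℝ) → ℂ} (hF : ∀ w, F w = (A w : ℂ) + k * (B w : ℂ) + l * (C w : ℂ)) (i : Fin 4) :
    pdC i F z = a i + k * b i + l * c i := by
  obtain ⟨LA, hA, hA'⟩ := hA
  obtain ⟨LB, hB, hB'⟩ := hB
  obtain ⟨LC, hC, hC'⟩ := hC
  have e (f : (Fin 4 → ℝ) → ℝ) (L : (Fin 4 → ℝ) →L[ℝ] ℝ) (h : HasFDerivAt f L z) :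
      HasFDerivAt (fun w => (f w : ℂ)) (Complex.ofRealCLM.comp L) z :=
    Complex.ofRealCLM.hasFDerivAt.comp z h
  have := ((e A LA hA).add ((e B LB hB).const_mul k)).add ((e C LC hC).const_mul l)
  have h2 : HasFDerivAt F _ z := this.congr_of_eventuallyEq (Filter.Eventually.of_forall hF)
  unfold pdC
  rw [h2.fderiv]
  simp [hA', hB', hC']

theorem statement9 (α : ℂ) (b : ℝ) (z : Fin 4 → ℝ)
    (hz : 0 < z 1) (hz' : z 1 < π / 2) :
    pbC (H1gor α b) (H2gor α b) z = 0 := by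
  have hs : 0 < Real.sin (z 1) := Real.sin_pos_of_pos_of_lt_pi hz (by linarith [Real.pi_pos])
  have hc : 0 < Real.cos (z 1) := Real.cos_pos_of_mem_Ioo ⟨by linarith, hz'⟩
  have hS := (hasGrad_coord 0 z).comp (Real.hasDerivAt_sin (z 0))
  have hC := (hasGrad_coord 0 z).comp (Real.hasDerivAt_cos (z 0))
  have hs1 := (hasGrad_coord 1 z).comp (Real.hasDerivAt_sin (z 1))
  obtain ⟨u, hu⟩ : ∃ u, u = Real.cos (z 1) ^ ((1 : ℝ) / 3) := ⟨_, rfl⟩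
  have hu0 : 0 < u := hu ▸ Real.rpow_pos_of_pos hc _
  have hcu : Real.cos (z 1) = u ^ 3 := by
    rw [hu, ← Real.rpow_natCast, ← Real.rpow_mul hc.le]; norm_num
  have hru : Real.cos (z 1) ^ (-(2 : ℝ) / 3) = (u ^ 2)⁻¹ := by
    rw [hu, ← Real.rpow_natCast, ← Real.rpow_mul hc.le, ← Real.rpow_neg hc.le]; norm_num
  have hru' : Real.cos (z 1) ^ (-(2 : ℝ) / 3 - 1) = (u ^ 5)⁻¹ := by
    rw [hu, ← Real.rpow_natCast, ← Real.rpow_mul hc.le, ← Real.rpow_neg hc.le]; norm_num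
  have hqu' : Real.cos (z 1) ^ ((1 : ℝ) / 3 - 1) = (u ^ 2)⁻¹ := by
    rw [hu, ← Real.rpow_natCast, ← Real.rpow_mul hc.le, ← Real.rpow_neg hc.le]; norm_num
  have hk := (hasGrad_coord 1 z).comp (u := fun t => Real.cos t / Real.sin t)
    (u' := -1 / Real.sin (z 1) ^ 2) (by
      refine ((Real.hasDerivAt_cos (z 1)).div (Real.hasDerivAt_sin (z 1)) hs.ne').congr_deriv ?_
      congr 1
      linear_combination -Real.sin_sq_add_cos_sq (z 1))
  have hr := (hasGrad_coord 1 z).comp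
    ((Real.hasDerivAt_cos (z 1)).rpow_const (p := -(2 : ℝ) / 3) (Or.inl hc.ne'))
  have hq := (hasGrad_coord 1 z).comp
    ((Real.hasDerivAt_cos (z 1)).rpow_const (p := (1 : ℝ) / 3) (Or.inl hc.ne'))
  have hP := hasGrad_coord 2 z
  have hT := hasGrad_coord 3 z
  have hkP := hk.mul hP
  have hK := (hkP.mul hkP).add (hT.mul hT)
  have hA1 := (hK.add ((hP.mul hP).const_mul (4 / 3))).add (hr.const_mul (-b))
  have hB1 := (hS.mul hs1).mul hr
  have hA2 := (hP.const_mul (-2 / 3)).mul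
    ((hK.add ((hP.mul hP).const_mul (8 / 9))).add (hr.const_mul (-b)))
  have hB2 := hq.mul ((hS.mul hkP).add ((hC.mul hT).const_mul (-1)))
  have hB3 := ((hr.mul (hS.mul hs1)).mul hP).const_mul (-1)
  have key (w : Fin 4 → ℝ) : J1 w ^ 2 + J2 w ^ 2 =
      (Real.cos (w 1) / Real.sin (w 1) * w 2) * (Real.cos (w 1) / Real.sin (w 1) * w 2)
        + w 3 * w 3 := by
    unfold J1 J2
    linear_combination ((Real.cos (w 1) / Real.sin (w 1) * w 2) ^ 2 + w 3 ^ 2) *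
      Real.sin_sq_add_cos_sq (w 0)
  have e1 := pdC_combo hA1 hB1 hB1 (2 * Complex.I * α) 0 (F := H1gor α b) (fun w => by
    unfold H1gor
    rw [key]
    simp only [J3, x1, x3]
    push_cast
    ring)
  have e2 := pdC_combo hA2 hB2 hB3 (-(2 * Complex.I * α)) (4 * Complex.I * α / 3)
    (F := H2gor α b) (fun w => by
    unfold H2gor
    rw [key]
    simp only [J3, J1, x1, x3]
    push_cast
    ring)
  have hsc := Real.sin_sq_add_cos_sq (z 1)
  have hSC := Real.sin_sq_add_cos_sq (z 0)
  unfold pbC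
  simp only [e1, e2]
  clear e1 e2 hA1 hB1 hA2 hB2 hB3 hK hkP hT hP hr hq hk hs1 hC hS key
  simp only [hru, hru', hqu', ← hu]
  rw [hcu] at hsc ⊢
  clear hru hru' hqu' hcu hc hu
  generalize Real.sin (z 1) = s at *
  generalize Real.sin (z 0) = S at *
  generalize Real.cos (z 0) = C at *
  generalize z 2 = P at *
  generalize z 3 = T at *
  simp
  have hs' : (s : ℂ) ≠ 0 := by exact_mod_cast hs.ne'
  have hu' : (u : ℂ) ≠ 0 := by exact_mod_cast hu0.ne'
  have hsc' : (s : ℂ) ^ 2 + ((u : ℂ) ^ 3) ^ 2 = 1 := by exact_mod_cast hsc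
  generalize (s : ℂ) = s at *
  generalize (u : ℂ) = u at *
  have h6 : s ^ 2 = 1 - u ^ 6 := by linear_combination hsc'
  field_simp
  ring_nf
  linear_combination 324 * I * α * P * (u ^ 6 * s * T * S + u ^ 9 * C * P) * hsc'
end

section
/- Let a, b, c, d be real parameters, let x₂₂ be an arbitrary smooth real function of θ, and work on a domain where sin φ cos φ sin θ cos θ ≠ 0. Define Π₁₁ = p_φ², Π₁₂ = (1 + tan²θ) p_φ p_θ, Π₂₁ = 0, Π₂₂ = (1 + tan²θ) p_φ² + p_θ², y₁₂ = 2 x₂₂(θ) − cos θ sin θ; set f(φ) = a cot²φ + b/sin²φ + c/(sin²φ cos²φ) + 2d cos²φ (2cos²φ − 3)/sin²φ and g(φ,θ) = 2d sin³θ sin 2φ/cos θ, and let Λ₁₁ = f(φ), Λ₁₂ = g(φ,θ), Λ₂₁ = f′(φ) sin θ/(2 cos θ) − g(φ,θ), Λ₂₂ = 2 cos 2φ (2cos²θ + 1) g(φ,θ)/(sin 2φ sin 2θ) + f(φ)/cos²θ + a tan²θ. Define the bivector π′ by {φ,θ}_{π′} = x₂₂ ∂Π₂₂/∂p_φ − y₁₂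 ∂Π₁₂/∂p_θ, {q_i,p_j}_{π′} = Π_{ij} + Λ_{ij} (where (q₁,q₂,p₁,p₂) = (φ,θ,p_φ,p_θ)), and {p_φ,p_θ}_{π′} = (∂Λ₁₁/∂θ − ∂Λ₁₂/∂φ) p_φ + (∂Λ₂₁/∂θ − ∂Λ₂₂/∂φ) p_θ. Then: (i) π′ is a Poisson bivector compatible with the canonical bivector P; (ii) with N = π′ P^{−1} (a matrix product of the 4×4 matrices of π′ and the inverse of the matrix of P), the functions ℋ₁ = (1/2) tr N and ℋ₂ = (1/4) tr N² satisfy {ℋ₁, ℋ₂}_P = 0 and {ℋ₁, ℋ₂}_{π′} = 0. -/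
open Real

/-- Partial derivative in the `i`-th coordinate direction on `ℝ⁴`
(coordinates `z 0 = φ`, `z 1 = θ`, `z 2 = p_φ`, `z 3 = p_θ`). -/
noncomputable def pd (i : Fin 4) (F : (Fin 4 → ℝ) → ℝ) (z : Fin 4 → ℝ) : ℝ :=
  fderiv ℝ F z (Pi.single i 1)

/-- The Poisson bracket of `F` and `G` defined by a bivector `π`. -/
noncomputable def pbiv (Pv : (Fin 4 → ℝ) → Matrix (Fin 4) (Fin 4) ℝ)
    (F G : (Fin 4 → ℝ) → ℝ) (z : Fin 4 → ℝ) : ℝ :=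
  ∑ i : Fin 4, ∑ j : Fin 4, Pv z i j * pd i F z * pd j G z

/-- A bivector `π` satisfies the Jacobi identity (is a Poisson bivector) on `U`. -/
def IsPoissonOn (Pv : (Fin 4 → ℝ) → Matrix (Fin 4) (Fin 4) ℝ)
    (U : Set (Fin 4 → ℝ)) : Prop :=
  ∀ z ∈ U, ∀ i j k : Fin 4,
    (∑ l : Fin 4, (Pv z l i * pd l (fun w => Pv w j k) z
      + Pv z l j * pd l (fun w => Pv w k i) z
      + Pv z l k * pd l (fun w => Pv w i j) z)) = 0

/-- The antisymmetric matrix with the given upper-triangular entries: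
`a = {φ,θ}`, `b = {φ,p_φ}`, `c = {φ,p_θ}`, `d = {θ,p_φ}`, `e = {θ,p_θ}`, `f = {p_φ,p_θ}`. -/
noncomputable def skew (a b c d e f : ℝ) : Matrix (Fin 4) (Fin 4) ℝ :=
  !![0, a, b, c; -a, 0, d, e; -b, -d, 0, f; -c, -e, -f, 0]

/-- The canonical Poisson bivector: `{φ,p_φ} = {θ,p_θ} = 1`, all other brackets zero. -/
noncomputable def Pcan : Matrix (Fin 4) (Fin 4) ℝ :=
  !![0, 0, 1, 0; 0, 0, 0, 1; -1, 0, 0, 0; 0, -1, 0, 0]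

/-- `f(φ) = a cot²φ + b/sin²φ + c/(sin²φ cos²φ) + 2d cos²φ (2cos²φ − 3)/sin²φ`. -/
noncomputable def fpot (a b c d : ℝ) (φ : ℝ) : ℝ :=
  a * (cos φ / sin φ) ^ 2 + b / sin φ ^ 2 + c / (sin φ ^ 2 * cos φ ^ 2)
    + 2 * d * cos φ ^ 2 * (2 * cos φ ^ 2 - 3) / sin φ ^ 2

/-- `g(φ,θ) = 2d sin³θ sin 2φ/cos θ`. -/
noncomputable def gpot (d : ℝ) (φ θ : ℝ) : ℝ :=
  2 * d * sin θ ^ 3 * sin (2 * φ) / cos θ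

noncomputable def Pi11 (z : Fin 4 → ℝ) : ℝ := z 2 ^ 2

noncomputable def Pi12 (z : Fin 4 → ℝ) : ℝ := (1 + tan (z 1) ^ 2) * z 2 * z 3

noncomputable def Pi21 (z : Fin 4 → ℝ) : ℝ := 0

noncomputable def Pi22 (z : Fin 4 → ℝ) : ℝ := (1 + tan (z 1) ^ 2) * z 2 ^ 2 + z 3 ^ 2

noncomputable def La11 (a b c d : ℝ) (z : Fin 4 → ℝ) : ℝ := fpot a b c d (z 0)

noncomputable def La12 (d : ℝ) (z : Fin 4 → ℝ) : ℝ := gpot d (z 0) (z 1)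

noncomputable def La21 (a b c d : ℝ) (z : Fin 4 → ℝ) : ℝ :=
  deriv (fpot a b c d) (z 0) * sin (z 1) / (2 * cos (z 1)) - gpot d (z 0) (z 1)

noncomputable def La22 (a b c d : ℝ) (z : Fin 4 → ℝ) : ℝ :=
  2 * cos (2 * z 0) * (2 * cos (z 1) ^ 2 + 1) * gpot d (z 0) (z 1)
      / (sin (2 * z 0) * sin (2 * z 1))
    + fpot a b c d (z 0) / cos (z 1) ^ 2 + a * tan (z 1) ^ 2

/-- `y₁₂ = 2 x₂₂(θ) − cos θ sin θ`. -/
noncomputable def y12 (x22 : ℝ → ℝ) (z : Fin 4 → ℝ) : ℝ :=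
  2 * x22 (z 1) - cos (z 1) * sin (z 1)

/-- The natural Poisson bivector `π′`:
`{φ,θ} = x₂₂ ∂Π₂₂/∂p_φ − y₁₂ ∂Π₁₂/∂p_θ`, `{q_i,p_j} = Π_{ij} + Λ_{ij}`,
`{p_φ,p_θ} = (∂Λ₁₁/∂θ − ∂Λ₁₂/∂φ) p_φ + (∂Λ₂₁/∂θ − ∂Λ₂₂/∂φ) p_θ`. -/
noncomputable def piNew (a b c d : ℝ) (x22 : ℝ → ℝ) (z : Fin 4 → ℝ) :
    Matrix (Fin 4) (Fin 4) ℝ :=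
  skew
    (x22 (z 1) * pd 2 Pi22 z - y12 x22 z * pd 3 Pi12 z)
    (Pi11 z + La11 a b c d z)
    (Pi12 z + La12 d z)
    (Pi21 z + La21 a b c d z)
    (Pi22 z + La22 a b c d z)
    ((pd 1 (La11 a b c d) z - pd 0 (La12 d) z) * z 2
      + (pd 1 (La21 a b c d) z - pd 0 (La22 a b c d) z) * z 3)

/-- The recursion operator `N = π′ P⁻¹`. -/
noncomputable def Nrec (a b c d : ℝ) (x22 : ℝ → ℝ) (z : Fin 4 → ℝ) :
    Matrix (Fin 4) (Fin 4) ℝ :=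
  piNew a b c d x22 z * Pcan⁻¹

/-- `ℋ₁ = (1/2) tr N`. -/
noncomputable def Hcal1 (a b c d : ℝ) (x22 : ℝ → ℝ) (z : Fin 4 → ℝ) : ℝ :=
  (1 / 2) * Matrix.trace (Nrec a b c d x22 z)

/-- `ℋ₂ = (1/4) tr N²`. -/
noncomputable def Hcal2 (a b c d : ℝ) (x22 : ℝ → ℝ) (z : Fin 4 → ℝ) : ℝ :=
  (1 / 4) * Matrix.trace (Nrec a b c d x22 z * Nrec a b c d x22 z)

/-- The canonical Poisson bracket on functions of `(φ, θ, p_φ, p_θ)`. -/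
noncomputable def pb (F G : (Fin 4 → ℝ) → ℝ) (z : Fin 4 → ℝ) : ℝ :=
  pd 0 F z * pd 2 G z - pd 2 F z * pd 0 G z + pd 1 F z * pd 3 G z - pd 3 F z * pd 1 G z

/-! ## Gradients as vectors -/

/-- `F` is differentiable at `z` with partial derivatives `D 0, …, D 3`. -/
def HasPD (F : (Fin 4 → ℝ) → ℝ) (z : Fin 4 → ℝ) (D : Fin 4 → ℝ) : Prop :=
  HasFDerivAt F (∑ i : Fin 4, D i • (ContinuousLinearMap.proj i : (Fin 4 → ℝ) →L[ℝ] ℝ)) z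

theorem HasPD.pd_eq {F : (Fin 4 → ℝ) → ℝ} {z D : Fin 4 → ℝ} (h : HasPD F z D) (i : Fin 4) :
    pd i F z = D i := by
  unfold pd
  rw [HasFDerivAt.fderiv h]
  simp [Pi.single_apply]

theorem HasPD.of {F : (Fin 4 → ℝ) → ℝ} {z D : Fin 4 → ℝ} {L : (Fin 4 → ℝ) →L[ℝ] ℝ}
    (h : HasFDerivAt F L z) (hL : ∀ v, L v = ∑ i, D i * v i) : HasPD F z D := by
  refine HasFDerivAt.congr_fderiv h (ContinuousLinearMap.ext fun v => ?_)
  rw [hL]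
  simp

theorem HasPD.const (c : ℝ) (z : Fin 4 → ℝ) : HasPD (fun _ => c) z (fun _ => 0) :=
  HasPD.of (hasFDerivAt_const c z) (fun v => by simp)

theorem HasPD.coord (i : Fin 4) (z : Fin 4 → ℝ) :
    HasPD (fun w => w i) z (Pi.single i 1) :=
  HasPD.of ((ContinuousLinearMap.proj i : (Fin 4 → ℝ) →L[ℝ] ℝ).hasFDerivAt (x := z))
    (fun v => by simp [Pi.single_apply])

theorem HasPD.add {F G : (Fin 4 → ℝ) → ℝ} {z D E : Fin 4 → ℝ} (hF : HasPD F z D)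
    (hG : HasPD G z E) : HasPD (fun w => F w + G w) z (fun i => D i + E i) :=
  HasPD.of (HasFDerivAt.add hF hG) (fun v => by simp [Fin.sum_univ_four]; ring)

theorem HasPD.sub {F G : (Fin 4 → ℝ) → ℝ} {z D E : Fin 4 → ℝ} (hF : HasPD F z D)
    (hG : HasPD G z E) : HasPD (fun w => F w - G w) z (fun i => D i - E i) :=
  HasPD.of (HasFDerivAt.sub hF hG) (fun v => by simp [Fin.sum_univ_four]; ring)

theorem HasPD.mul {F G : (Fin 4 → ℝ) → ℝ} {z D E : Fin 4 → ℝ} (hF : HasPD F z D)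
    (hG : HasPD G z E) :
    HasPD (fun w => F w * G w) z (fun i => D i * G z + F z * E i) :=
  HasPD.of (HasFDerivAt.mul hF hG) (fun v => by simp [Fin.sum_univ_four]; ring)

theorem HasPD.cmul {F : (Fin 4 → ℝ) → ℝ} {z D : Fin 4 → ℝ} (c : ℝ) (hF : HasPD F z D) :
    HasPD (fun w => c * F w) z (fun i => c * D i) :=
  HasPD.of (HasFDerivAt.const_mul hF c) (fun v => by simp [Fin.sum_univ_four]; ring)

theorem HasPD.comp {f : ℝ → ℝ} {f' : ℝ} (i : Fin 4) {z : Fin 4 → ℝ}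
    (hf : HasDerivAt f f' (z i)) :
    HasPD (fun w => f (w i)) z (Pi.single i f') :=
  HasPD.of (HasDerivAt.comp_hasFDerivAt z hf
    ((ContinuousLinearMap.proj i : (Fin 4 → ℝ) →L[ℝ] ℝ).hasFDerivAt (x := z)))
    (fun v => by simp [Pi.single_apply])

theorem HasPD.congr {F G : (Fin 4 → ℝ) → ℝ} {z D : Fin 4 → ℝ} (hF : HasPD F z D)
    (h : G =ᶠ[nhds z] F) : HasPD G z D :=
  HasFDerivAt.congr_of_eventuallyEq hF h

/-! ## The domain -/

/-- The domain on which everything is defined. -/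
def Dom : Set (Fin 4 → ℝ) := {z | sin (z 0) * cos (z 0) * sin (z 1) * cos (z 1) ≠ 0}

theorem Dom_nhds {z : Fin 4 → ℝ} (hz : z ∈ Dom) : ∀ᶠ w in nhds z, w ∈ Dom := by
  have : IsOpen Dom := by
    unfold Dom
    apply isOpen_ne_fun <;> fun_prop
  exact this.mem_nhds hz

theorem Dom_ne {z : Fin 4 → ℝ} (hz : z ∈ Dom) :
    sin (z 0) ≠ 0 ∧ cos (z 0) ≠ 0 ∧ sin (z 1) ≠ 0 ∧ cos (z 1) ≠ 0 := by
  simp only [Dom, Set.mem_ofPred_eq, mul_ne_zero_iff] at hz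
  tauto

/-! ## Simplified potentials, in terms of the double angle -/

/-- The singular part `h = (A + B cos 2φ) / sin² 2φ` of the potential `f`. -/
noncomputable def hs (a b c d : ℝ) (x : ℝ) : ℝ :=
  (2 * (a + b + 2 * c - 2 * d) + 2 * (a + b - 2 * d) * cos (2 * x)) / sin (2 * x) ^ 2

/-- The derivative of `hs`. -/
noncomputable def hs1 (a b c d : ℝ) (x : ℝ) : ℝ :=
  (- 4 * (a + b - 2 * d) - 4 * cos (2 * x) * hs a b c d x) / sin (2 * x)

theorem hasDerivAt_sin2 (x : ℝ) : HasDerivAt (fun y => sin (2 * y)) (2 * cos (2 * x)) x := by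
  have := (hasDerivAt_sin (2 * x)).comp x ((hasDerivAt_id x).const_mul 2)
  refine this.congr_deriv ?_
  simp; ring

theorem hasDerivAt_cos2 (x : ℝ) : HasDerivAt (fun y => cos (2 * y)) (-2 * sin (2 * x)) x := by
  have := (hasDerivAt_cos (2 * x)).comp x ((hasDerivAt_id x).const_mul 2)
  refine this.congr_deriv ?_
  simp; ring

theorem hasDerivAt_hs (a b c d x : ℝ) (hx : sin (2 * x) ≠ 0) :
    HasDerivAt (hs a b c d) (hs1 a b c d x) x := by
  have h1 := ((hasDerivAt_cos2 x).const_mul (2 * (a + b - 2 * d))).const_add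
    (2 * (a + b + 2 * c - 2 * d))
  have := h1.div ((hasDerivAt_sin2 x).pow 2) (pow_ne_zero 2 hx)
  refine this.congr_deriv ?_
  unfold hs1 hs
  simp only [Pi.pow_apply]
  field_simp
  ring

theorem hasDerivAt_hs1 (a b c d x : ℝ) (hx : sin (2 * x) ≠ 0) :
    HasDerivAt (hs1 a b c d)
      (8 * hs a b c d x - 6 * (cos (2 * x) / sin (2 * x)) * hs1 a b c d x) x := by
  have h1 := (((hasDerivAt_cos2 x).const_mul 4).mul (hasDerivAt_hs a b c d x hx)).const_sub
    (- 4 * (a + b - 2 * d))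
  have := h1.div (hasDerivAt_sin2 x) hx
  have e : sin (2 * x) * hs1 a b c d x
      = - 4 * (a + b - 2 * d) - 4 * cos (2 * x) * hs a b c d x := by
    unfold hs1; field_simp
  refine this.congr_deriv ?_
  simp only [Pi.mul_apply]
  rw [← e]
  field_simp
  ring

theorem fpot_eq (a b c d x : ℝ) (h1 : sin x ≠ 0) (h2 : cos x ≠ 0) :
    fpot a b c d x = hs a b c d x - a - 2 * d * cos (2 * x) := by
  unfold fpot hs
  have hc : cos (2 * x) = 1 - 2 * sin x ^ 2 := by rw [cos_two_mul, cos_sq']; ring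
  have hs : cos x ^ 2 = 1 - sin x ^ 2 := cos_sq' x
  have hs' : 1 - sin x ^ 2 ≠ 0 := by rw [← hs]; positivity
  rw [hc, sin_two_mul, div_pow, mul_pow, mul_pow, hs]
  field_simp
  ring

theorem sin2_ne {x : ℝ} (h1 : sin x ≠ 0) (h2 : cos x ≠ 0) : sin (2 * x) ≠ 0 := by
  rw [sin_two_mul]; positivity

theorem deriv_fpot (a b c d x : ℝ) (h1 : sin x ≠ 0) (h2 : cos x ≠ 0) :
    deriv (fpot a b c d) x = hs1 a b c d x + 4 * d * sin (2 * x) := by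
  have e1 : ∀ᶠ y in nhds x, sin y ≠ 0 := continuous_sin.continuousAt.eventually_ne h1
  have e2 : ∀ᶠ y in nhds x, cos y ≠ 0 := continuous_cos.continuousAt.eventually_ne h2
  have e : fpot a b c d =ᶠ[nhds x] fun x => hs a b c d x - a - 2 * d * cos (2 * x) := by
    filter_upwards [e1, e2] with y g1 g2 using fpot_eq a b c d y g1 g2
  rw [e.deriv_eq]
  have := ((hasDerivAt_hs a b c d x (sin2_ne h1 h2)).sub_const a).sub
    ((hasDerivAt_cos2 x).const_mul (2 * d))
  refine this.deriv.trans ?_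
  ring

/-! ## Nice forms of the entries -/

/-- `Λ₁₁` -/
noncomputable def n11 (a b c d : ℝ) (z : Fin 4 → ℝ) : ℝ :=
  hs a b c d (z 0) - a - 2 * d * cos (2 * z 0)

/-- `Λ₁₂` -/
noncomputable def n12 (d : ℝ) (z : Fin 4 → ℝ) : ℝ :=
  2 * d * (sin (2 * z 0) * (tan (z 1) - tan (z 1) * cos (z 1) ^ 2))

/-- `Λ₂₁` -/
noncomputable def n21 (a b c d : ℝ) (z : Fin 4 → ℝ) : ℝ :=
  1 / 2 * ((hs1 a b c d (z 0) + 4 * d * sin (2 * z 0)) * tan (z 1)) - n12 d z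

/-- `Λ₂₂` -/
noncomputable def n22 (a b c d : ℝ) (z : Fin 4 → ℝ) : ℝ :=
  2 * d * (cos (2 * z 0) * ((2 - 2 * cos (z 1) ^ 2) + tan (z 1) * tan (z 1)))
    + n11 a b c d z * (1 + tan (z 1) * tan (z 1)) + a * (tan (z 1) * tan (z 1))

theorem La11_eq (a b c d : ℝ) {z : Fin 4 → ℝ} (hz : z ∈ Dom) :
    La11 a b c d z = n11 a b c d z := by
  obtain ⟨h1, h2, h3, h4⟩ := Dom_ne hz
  exact fpot_eq a b c d _ h1 h2

theorem La12_eq (d : ℝ) {z : Fin 4 → ℝ} (hz : z ∈ Dom) : La12 d z = n12 d z := by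
  obtain ⟨h1, h2, h3, h4⟩ := Dom_ne hz
  unfold La12 gpot n12
  rw [cos_sq' (z 1), tan_eq_sin_div_cos]
  field_simp
  ring

theorem La21_eq (a b c d : ℝ) {z : Fin 4 → ℝ} (hz : z ∈ Dom) :
    La21 a b c d z = n21 a b c d z := by
  obtain ⟨h1, h2, h3, h4⟩ := Dom_ne hz
  have := La12_eq d hz
  unfold La12 at this
  unfold La21 n21
  rw [this, deriv_fpot a b c d _ h1 h2, tan_eq_sin_div_cos]
  field_simp

theorem La22_eq (a b c d : ℝ) {z : Fin 4 → ℝ} (hz : z ∈ Dom) :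
    La22 a b c d z = n22 a b c d z := by
  obtain ⟨h1, h2, h3, h4⟩ := Dom_ne hz
  have := sin2_ne h1 h2
  have e : (1 : ℝ) + tan (z 1) * tan (z 1) = 1 / cos (z 1) ^ 2 := by
    rw [tan_eq_sin_div_cos]
    field_simp
    linarith [sin_sq_add_cos_sq (z 1)]
  have e2 : (2 - 2 * cos (z 1) ^ 2) + tan (z 1) * tan (z 1)
      = (2 * cos (z 1) ^ 2 + 1) * sin (z 1) ^ 2 / cos (z 1) ^ 2 := by
    rw [tan_eq_sin_div_cos]
    field_simp
    rw [sin_sq]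
    ring
  unfold La22 n22 gpot
  rw [e, e2, fpot_eq a b c d _ h1 h2, sin_two_mul (z 1), n11]
  field_simp

/-! ## Partial derivatives of the nice forms -/

section
variable {z : Fin 4 → ℝ}

theorem pd_tan (hz : z ∈ Dom) :
    HasPD (fun w => tan (w 1)) z (Pi.single 1 (1 + tan (z 1) ^ 2)) := by
  obtain ⟨h1, h2, h3, h4⟩ := Dom_ne hz
  apply HasPD.comp
  refine (hasDerivAt_tan h4).congr_deriv ?_
  rw [tan_eq_sin_div_cos]
  field_simp
  linarith [sin_sq_add_cos_sq (z 1)]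

theorem pd_cossq (hz : z ∈ Dom) :
    HasPD (fun w => cos (w 1) ^ 2) z (Pi.single 1 (- 2 * tan (z 1) * cos (z 1) ^ 2)) := by
  obtain ⟨h1, h2, h3, h4⟩ := Dom_ne hz
  apply HasPD.comp (f := fun x => cos x ^ 2)
  refine ((hasDerivAt_cos (z 1)).pow 2).congr_deriv ?_
  rw [tan_eq_sin_div_cos]
  field_simp
  simp

theorem pd_n11 (a b c d : ℝ) (hz : z ∈ Dom) :
    HasPD (n11 a b c d) z (Pi.single 0 (hs1 a b c d (z 0) + 4 * d * sin (2 * z 0))) := by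
  obtain ⟨h1, h2, h3, h4⟩ := Dom_ne hz
  apply HasPD.comp (f := fun x => hs a b c d x - a - 2 * d * cos (2 * x))
  refine (((hasDerivAt_hs a b c d _ (sin2_ne h1 h2)).sub_const a).sub
    ((hasDerivAt_cos2 _).const_mul (2 * d))).congr_deriv ?_
  ring

theorem HasPD.vec {F : (Fin 4 → ℝ) → ℝ} {D : Fin 4 → ℝ} (h : HasPD F z D)
    (x0 x1 x2 x3 : ℝ) (h0 : D 0 = x0) (h1 : D 1 = x1) (h2 : D 2 = x2) (h3 : D 3 = x3) :
    HasPD F z ![x0, x1, x2, x3] := by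
  convert h using 1
  ext i
  fin_cases i <;> simp [*]

theorem pd_n12 (d : ℝ) (hz : z ∈ Dom) :
    HasPD (n12 d) z ![4 * d * cos (2 * z 0) * (tan (z 1) - tan (z 1) * cos (z 1) ^ 2),
      2 * d * sin (2 * z 0) * ((1 + tan (z 1) ^ 2) * (1 - cos (z 1) ^ 2)
        + 2 * tan (z 1) ^ 2 * cos (z 1) ^ 2), 0, 0] := by
  have hu := pd_tan hz
  have hv := pd_cossq hz
  have hσ : HasPD (fun w => sin (2 * w 0)) z _ := HasPD.comp 0 (hasDerivAt_sin2 (z 0))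
  refine ((hσ.mul (hu.sub (hu.mul hv))).cmul (2 * d)).vec _ _ _ _ ?_ ?_ ?_ ?_ <;>
    simp <;> ring

theorem pd_n21 (a b c d : ℝ) (hz : z ∈ Dom) :
    HasPD (n21 a b c d) z
     ![1 / 2 * (8 * hs a b c d (z 0)
          - 6 * (cos (2 * z 0) / sin (2 * z 0)) * hs1 a b c d (z 0)
          + 8 * d * cos (2 * z 0)) * tan (z 1)
        - 4 * d * cos (2 * z 0) * (tan (z 1) - tan (z 1) * cos (z 1) ^ 2),
      1 / 2 * (hs1 a b c d (z 0) + 4 * d * sin (2 * z 0)) * (1 + tan (z 1) ^ 2)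
      - 2 * d * sin (2 * z 0) * ((1 + tan (z 1) ^ 2) * (1 - cos (z 1) ^ 2)
        + 2 * tan (z 1) ^ 2 * cos (z 1) ^ 2), 0, 0] := by
  obtain ⟨h1, h2, h3, h4⟩ := Dom_ne hz
  have hu := pd_tan hz
  have hσ : HasPD (fun w => sin (2 * w 0)) z _ := HasPD.comp 0 (hasDerivAt_sin2 (z 0))
  have hh : HasPD (fun w => hs1 a b c d (w 0)) z _ :=
    HasPD.comp 0 (hasDerivAt_hs1 a b c d (z 0) (sin2_ne h1 h2))
  refine ((((hh.add (hσ.cmul (4 * d))).mul hu).cmul (1 / 2)).sub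
    (pd_n12 d hz)).vec _ _ _ _ ?_ ?_ ?_ ?_ <;>
    simp <;> try ring

theorem pd_n22 (a b c d : ℝ) (hz : z ∈ Dom) :
    HasPD (n22 a b c d) z
     ![- 4 * d * sin (2 * z 0) * (2 - 2 * cos (z 1) ^ 2 + tan (z 1) ^ 2)
        + (hs1 a b c d (z 0) + 4 * d * sin (2 * z 0)) * (1 + tan (z 1) ^ 2),
      2 * d * cos (2 * z 0) * (4 * tan (z 1) * cos (z 1) ^ 2
          + 2 * tan (z 1) * (1 + tan (z 1) ^ 2))
        + (n11 a b c d z + a) * (2 * tan (z 1) * (1 + tan (z 1) ^ 2)), 0, 0] := by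
  have hu := pd_tan hz
  have hv := pd_cossq hz
  have hκ : HasPD (fun w => cos (2 * w 0)) z _ := HasPD.comp 0 (hasDerivAt_cos2 (z 0))
  have huu := hu.mul hu
  refine ((((hκ.mul (((HasPD.const 2 z).sub (hv.cmul 2)).add huu)).cmul (2 * d)).add
    ((pd_n11 a b c d hz).mul ((HasPD.const 1 z).add huu))).add
    (huu.cmul a)).vec _ _ _ _ ?_ ?_ ?_ ?_ <;>
    simp <;> try ring

end

/-! ## Nice form of the bivector -/

noncomputable def eA (z : Fin 4 → ℝ) : ℝ := tan (z 1) * z 2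

noncomputable def eB (a b c d : ℝ) (z : Fin 4 → ℝ) : ℝ := z 2 * z 2 + n11 a b c d z

noncomputable def eC (d : ℝ) (z : Fin 4 → ℝ) : ℝ :=
  (1 + tan (z 1) * tan (z 1)) * (z 2 * z 3) + n12 d z

noncomputable def eD (a b c d : ℝ) (z : Fin 4 → ℝ) : ℝ := n21 a b c d z

noncomputable def eE (a b c d : ℝ) (z : Fin 4 → ℝ) : ℝ :=
  ((1 + tan (z 1) * tan (z 1)) * (z 2 * z 2) + z 3 * z 3) + n22 a b c d z

/-- Coefficient of `p_θ` in `{p_φ, p_θ}` -/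
noncomputable def eG (a b c d : ℝ) (z : Fin 4 → ℝ) : ℝ :=
  2 * d * (sin (2 * z 0) * (1 - 2 * cos (z 1) ^ 2))
   - 1 / 2 * (hs1 a b c d (z 0) * (1 + tan (z 1) * tan (z 1)))

noncomputable def eF (a b c d : ℝ) (z : Fin 4 → ℝ) : ℝ :=
  (-4 * d) * ((cos (2 * z 0) * (tan (z 1) - tan (z 1) * cos (z 1) ^ 2)) * z 2)
   + eG a b c d z * z 3

theorem cossq_rel {z : Fin 4 → ℝ} (hz : z ∈ Dom) :
    cos (z 1) ^ 2 = 1 / (1 + tan (z 1) ^ 2) := by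
  obtain ⟨h1, h2, h3, h4⟩ := Dom_ne hz
  have : (1 : ℝ) + tan (z 1) ^ 2 = 1 / cos (z 1) ^ 2 := by
    rw [tan_eq_sin_div_cos]
    field_simp
    linarith [sin_sq_add_cos_sq (z 1)]
  rw [this]
  simp

theorem pd_Pi22 {z : Fin 4 → ℝ} (hz : z ∈ Dom) :
    pd 2 Pi22 z = 2 * (1 + tan (z 1) ^ 2) * z 2 := by
  have hu := pd_tan hz
  have h := (((HasPD.const 1 z).add (hu.mul hu)).mul
    ((HasPD.coord 2 z).mul (HasPD.coord 2 z))).add ((HasPD.coord 3 z).mul (HasPD.coord 3 z))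
  have e : Pi22 = fun w => (1 + tan (w 1) * tan (w 1)) * (w 2 * w 2) + w 3 * w 3 := by
    funext w; unfold Pi22; ring
  rw [e, h.pd_eq 2]
  simp
  ring

theorem pd_Pi12 {z : Fin 4 → ℝ} (hz : z ∈ Dom) :
    pd 3 Pi12 z = (1 + tan (z 1) ^ 2) * z 2 := by
  have hu := pd_tan hz
  have h := ((HasPD.const 1 z).add (hu.mul hu)).mul
    ((HasPD.coord 2 z).mul (HasPD.coord 3 z))
  have e : Pi12 = fun w => (1 + tan (w 1) * tan (w 1)) * (w 2 * w 3) := by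
    funext w; unfold Pi12; ring
  rw [e, h.pd_eq 3]
  simp [-mul_eq_mul_left_iff, -mul_eq_mul_right_iff]
  ring

theorem piNew_eq (a b c d : ℝ) (x22 : ℝ → ℝ) {z : Fin 4 → ℝ} (hz : z ∈ Dom) :
    piNew a b c d x22 z =
      skew (eA z) (eB a b c d z) (eC d z) (eD a b c d z) (eE a b c d z) (eF a b c d z) := by
  obtain ⟨h1, h2, h3, h4⟩ := Dom_ne hz
  have hD := Dom_nhds hz
  have h11 := (pd_n11 a b c d hz).congr (hD.mono fun w hw => La11_eq a b c d hw)
  have h12 := (pd_n12 d hz).congr (hD.mono fun w hw => La12_eq d hw)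
  have h21 := (pd_n21 a b c d hz).congr (hD.mono fun w hw => La21_eq a b c d hw)
  have h22 := (pd_n22 a b c d hz).congr (hD.mono fun w hw => La22_eq a b c d hw)
  have hk : (1 : ℝ) + tan (z 1) ^ 2 ≠ 0 := by positivity
  unfold piNew
  rw [h11.pd_eq 1, h12.pd_eq 0, h21.pd_eq 1, h22.pd_eq 0, pd_Pi22 hz, pd_Pi12 hz,
    La11_eq a b c d hz, La12_eq d hz, La21_eq a b c d hz, La22_eq a b c d hz]
  congr 1
  · unfold y12 eA
    have : cos (z 1) * sin (z 1) = tan (z 1) * cos (z 1) ^ 2 := by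
      rw [tan_eq_sin_div_cos]; field_simp
    rw [this, cossq_rel hz]
    field_simp
    ring
  · unfold eB Pi11; ring
  · unfold eC Pi12; ring
  · unfold eD Pi21; ring
  · unfold eE Pi22; ring
  · unfold eF eG
    simp
    rw [cossq_rel hz]
    field_simp
    ring

/-! ## Partial derivatives of the entries -/

section
variable {z : Fin 4 → ℝ}

theorem pd_eA (hz : z ∈ Dom) : HasPD eA z ![0, (1 + tan (z 1) ^ 2) * z 2, tan (z 1), 0] := by
  refine ((pd_tan hz).mul (HasPD.coord 2 z)).vec _ _ _ _ ?_ ?_ ?_ ?_ <;> simp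

theorem pd_eB (a b c d : ℝ) (hz : z ∈ Dom) : HasPD (eB a b c d) z
    ![hs1 a b c d (z 0) + 4 * d * sin (2 * z 0), 0, 2 * z 2, 0] := by
  refine (((HasPD.coord 2 z).mul (HasPD.coord 2 z)).add (pd_n11 a b c d hz)).vec
    _ _ _ _ ?_ ?_ ?_ ?_ <;> simp <;> ring

theorem pd_eC (d : ℝ) (hz : z ∈ Dom) : HasPD (eC d) z
    ![4 * d * cos (2 * z 0) * (tan (z 1) - tan (z 1) * cos (z 1) ^ 2),
      2 * tan (z 1) * (1 + tan (z 1) ^ 2) * z 2 * z 3 +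
      2 * d * sin (2 * z 0) * ((1 + tan (z 1) ^ 2) * (1 - cos (z 1) ^ 2)
        + 2 * tan (z 1) ^ 2 * cos (z 1) ^ 2),
      (1 + tan (z 1) ^ 2) * z 3, (1 + tan (z 1) ^ 2) * z 2] := by
  have hu := pd_tan hz
  refine ((((HasPD.const 1 z).add (hu.mul hu)).mul
    ((HasPD.coord 2 z).mul (HasPD.coord 3 z))).add (pd_n12 d hz)).vec
    _ _ _ _ ?_ ?_ ?_ ?_ <;> simp [-mul_eq_mul_left_iff, -mul_eq_mul_right_iff] <;> ring

theorem pd_eE (a b c d : ℝ) (hz : z ∈ Dom) : HasPD (eE a b c d) z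
     ![- 4 * d * sin (2 * z 0) * (2 - 2 * cos (z 1) ^ 2 + tan (z 1) ^ 2)
        + (hs1 a b c d (z 0) + 4 * d * sin (2 * z 0)) * (1 + tan (z 1) ^ 2),
      2 * tan (z 1) * (1 + tan (z 1) ^ 2) * z 2 ^ 2 +
      2 * d * cos (2 * z 0) * (4 * tan (z 1) * cos (z 1) ^ 2
          + 2 * tan (z 1) * (1 + tan (z 1) ^ 2))
        + (n11 a b c d z + a) * (2 * tan (z 1) * (1 + tan (z 1) ^ 2)),
      2 * (1 + tan (z 1) ^ 2) * z 2, 2 * z 3] := by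
  have hu := pd_tan hz
  refine (((((HasPD.const 1 z).add (hu.mul hu)).mul
    ((HasPD.coord 2 z).mul (HasPD.coord 2 z))).add
      ((HasPD.coord 3 z).mul (HasPD.coord 3 z))).add (pd_n22 a b c d hz)).vec
    _ _ _ _ ?_ ?_ ?_ ?_ <;> simp <;> ring

theorem pd_eG (a b c d : ℝ) (hz : z ∈ Dom) : HasPD (eG a b c d) z
    ![4 * d * cos (2 * z 0) * (1 - 2 * cos (z 1) ^ 2)
        - 1 / 2 * (8 * hs a b c d (z 0)
          - 6 * (cos (2 * z 0) / sin (2 * z 0)) * hs1 a b c d (z 0)) * (1 + tan (z 1) ^ 2),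
      8 * d * sin (2 * z 0) * tan (z 1) * cos (z 1) ^ 2
        - hs1 a b c d (z 0) * tan (z 1) * (1 + tan (z 1) ^ 2), 0, 0] := by
  obtain ⟨h1, h2, h3, h4⟩ := Dom_ne hz
  have hu := pd_tan hz
  have hv := pd_cossq hz
  have hσ : HasPD (fun w => sin (2 * w 0)) z _ := HasPD.comp 0 (hasDerivAt_sin2 (z 0))
  have hh : HasPD (fun w => hs1 a b c d (w 0)) z _ :=
    HasPD.comp 0 (hasDerivAt_hs1 a b c d (z 0) (sin2_ne h1 h2))
  refine (((hσ.mul ((HasPD.const 1 z).sub (hv.cmul 2))).cmul (2 * d)).sub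
    ((hh.mul ((HasPD.const 1 z).add (hu.mul hu))).cmul (1 / 2))).vec
    _ _ _ _ ?_ ?_ ?_ ?_ <;> simp <;> ring

theorem pd_eF (a b c d : ℝ) (hz : z ∈ Dom) : HasPD (eF a b c d) z
    ![8 * d * sin (2 * z 0) * (tan (z 1) - tan (z 1) * cos (z 1) ^ 2) * z 2
        + (4 * d * cos (2 * z 0) * (1 - 2 * cos (z 1) ^ 2)
        - 1 / 2 * (8 * hs a b c d (z 0)
          - 6 * (cos (2 * z 0) / sin (2 * z 0)) * hs1 a b c d (z 0))
          * (1 + tan (z 1) ^ 2)) * z 3,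
      -4 * d * cos (2 * z 0) * ((1 + tan (z 1) ^ 2) * (1 - cos (z 1) ^ 2)
        + 2 * tan (z 1) ^ 2 * cos (z 1) ^ 2) * z 2
        + (8 * d * sin (2 * z 0) * tan (z 1) * cos (z 1) ^ 2
        - hs1 a b c d (z 0) * tan (z 1) * (1 + tan (z 1) ^ 2)) * z 3,
      -4 * d * cos (2 * z 0) * (tan (z 1) - tan (z 1) * cos (z 1) ^ 2),
      eG a b c d z] := by
  have hu := pd_tan hz
  have hv := pd_cossq hz
  have hκ : HasPD (fun w => cos (2 * w 0)) z _ := HasPD.comp 0 (hasDerivAt_cos2 (z 0))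
  refine ((((hκ.mul (hu.sub (hu.mul hv))).mul (HasPD.coord 2 z)).cmul (-4 * d)).add
    ((pd_eG a b c d hz).mul (HasPD.coord 3 z))).vec
    _ _ _ _ ?_ ?_ ?_ ?_ <;> simp <;> ring

end

/-! ## Jacobi identity for a skew bivector -/

theorem pd_neg (i : Fin 4) (F : (Fin 4 → ℝ) → ℝ) (z : Fin 4 → ℝ) :
    pd i (fun w => - F w) z = - pd i F z := by
  unfold pd
  rw [fderiv_fun_neg]
  simp

theorem pd_zero (i : Fin 4) (z : Fin 4 → ℝ) : pd i (fun _ => (0 : ℝ)) z = 0 :=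
  (HasPD.const 0 z).pd_eq i

theorem pd_congr (i : Fin 4) {F G : (Fin 4 → ℝ) → ℝ} {z : Fin 4 → ℝ}
    (h : F =ᶠ[nhds z] G) : pd i F z = pd i G z := by
  unfold pd
  rw [h.fderiv_eq]

/-- The Jacobiator at a point. -/
noncomputable def jac (Pv : (Fin 4 → ℝ) → Matrix (Fin 4) (Fin 4) ℝ) (z : Fin 4 → ℝ)
    (i j k : Fin 4) : ℝ :=
  ∑ l : Fin 4, (Pv z l i * pd l (fun w => Pv w j k) z
      + Pv z l j * pd l (fun w => Pv w k i) z
      + Pv z l k * pd l (fun w => Pv w i j) z)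

theorem jac_rot (Pv : (Fin 4 → ℝ) → Matrix (Fin 4) (Fin 4) ℝ) (z : Fin 4 → ℝ)
    (i j k : Fin 4) : jac Pv z i j k = jac Pv z j k i := by
  unfold jac
  refine Finset.sum_congr rfl fun l _ => ?_
  ring

theorem jac_swap {Pv : (Fin 4 → ℝ) → Matrix (Fin 4) (Fin 4) ℝ}
    (hs : ∀ w i j, Pv w i j = - Pv w j i) (z : Fin 4 → ℝ)
    (i j k : Fin 4) : jac Pv z i j k = - jac Pv z j i k := by
  have h : ∀ l p q, pd l (fun w => Pv w p q) z = - pd l (fun w => Pv w q p) z := by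
    intro l p q
    rw [← pd_neg]
    congr 1
    funext w
    exact hs w p q
  unfold jac
  rw [← Finset.sum_neg_distrib]
  refine Finset.sum_congr rfl fun l _ => ?_
  rw [h l j k, h l k i, h l i j]
  ring

theorem jac_all {Pv : (Fin 4 → ℝ) → Matrix (Fin 4) (Fin 4) ℝ}
    (hs : ∀ w i j, Pv w i j = - Pv w j i) (z : Fin 4 → ℝ)
    (h012 : jac Pv z 0 1 2 = 0) (h013 : jac Pv z 0 1 3 = 0)
    (h023 : jac Pv z 0 2 3 = 0) (h123 : jac Pv z 1 2 3 = 0) (i j k : Fin 4) :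
    jac Pv z i j k = 0 := by
  have r := jac_rot Pv z
  have s := jac_swap hs z
  have diag : ∀ i k, jac Pv z i i k = 0 := fun i k => by linarith [s i i k]
  have sorted : ∀ i j k : Fin 4, i < j → j < k → jac Pv z i j k = 0 := by
    intro i j k hij hjk
    have : (i = 0 ∧ j = 1 ∧ k = 2) ∨ (i = 0 ∧ j = 1 ∧ k = 3) ∨ (i = 0 ∧ j = 2 ∧ k = 3)
      ∨ (i = 1 ∧ j = 2 ∧ k = 3) := by omega
    rcases this with ⟨rfl, rfl, rfl⟩ | ⟨rfl, rfl, rfl⟩ | ⟨rfl, rfl, rfl⟩ | ⟨rfl, rfl, rfl⟩ <;>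
      assumption
  rcases lt_trichotomy i j with hij | rfl | hij
  · rcases lt_trichotomy j k with hjk | rfl | hjk
    · exact sorted _ _ _ hij hjk
    · rw [r]; exact diag _ _
    · rcases lt_trichotomy i k with hik | rfl | hik
      · rw [s, r, sorted _ _ _ hik hjk, neg_zero]
      · rw [r, r]; exact diag _ _
      · rw [r, r]; exact sorted _ _ _ hik hij
  · exact diag _ _
  · rcases lt_trichotomy i k with hik | rfl | hik
    · rw [s, sorted _ _ _ hij hik, neg_zero]
    · rw [r, r]; exact diag _ _
    · rcases lt_trichotomy j k with hjk | rfl | hjk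
      · rw [r]; exact sorted _ _ _ hjk hik
      · rw [r]; exact diag _ _
      · rw [r, s, sorted _ _ _ hjk hij, neg_zero]

theorem skew_anti (a b c d e f : ℝ) (i j : Fin 4) :
    skew a b c d e f i j = - skew a b c d e f j i := by
  unfold skew
  fin_cases i <;> fin_cases j <;> simp

theorem jac_congr {Pv Qv : (Fin 4 → ℝ) → Matrix (Fin 4) (Fin 4) ℝ} {z : Fin 4 → ℝ}
    (h : Pv =ᶠ[nhds z] Qv) (i j k : Fin 4) : jac Pv z i j k = jac Qv z i j k := by
  have hp : ∀ l p q, pd l (fun w => Pv w p q) z = pd l (fun w => Qv w p q) z := by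
    intro l p q
    refine pd_congr l (h.mono fun w hw => ?_)
    change Pv w = Qv w at hw
    change Pv w p q = Qv w p q
    rw [hw]
  unfold jac
  rw [h.eq_of_nhds]
  simp only [hp]

/-- The pencil `π' + t P` in nice form. -/
noncomputable def nice (a b c d t : ℝ) (w : Fin 4 → ℝ) : Matrix (Fin 4) (Fin 4) ℝ :=
  skew (eA w) (eB a b c d w + t) (eC d w) (eD a b c d w) (eE a b c d w + t) (eF a b c d w)

/-- The four independent components of the Jacobi identity, from gradients. -/
theorem jac_nice (a b c d t : ℝ) {z : Fin 4 → ℝ} (hz : z ∈ Dom) (i j k : Fin 4) :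
    jac (nice a b c d t) z i j k = 0 := by
  obtain ⟨h1, h2, h3, h4⟩ := Dom_ne hz
  have hσ := sin2_ne h1 h2
  have hk : (1 : ℝ) + tan (z 1) ^ 2 ≠ 0 := by positivity
  have hv := cossq_rel hz
  have A := (pd_eA hz).pd_eq
  have B : ∀ l, pd l (fun w => eB a b c d w + t) z = _ :=
    ((pd_eB a b c d hz).add (HasPD.const t z)).pd_eq
  have C := (pd_eC d hz).pd_eq
  have D : ∀ l, pd l (eD a b c d) z = _ := (pd_n21 a b c d hz).pd_eq
  have E : ∀ l, pd l (fun w => eE a b c d w + t) z = _ :=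
    ((pd_eE a b c d hz).add (HasPD.const t z)).pd_eq
  have F := (pd_eF a b c d hz).pd_eq
  refine jac_all (Pv := nice a b c d t) (fun w i j => skew_anti _ _ _ _ _ _ i j) z ?_ ?_ ?_ ?_ i j k
  all_goals
    simp [jac, nice, skew, Fin.sum_univ_four, pd_neg, A, B, C, D, E, F, -neg_add_rev,
      -mul_eq_mul_left_iff, -mul_eq_mul_right_iff]
    simp only [eA, eB, eC, eD, eE, eF, eG, n11, n12, n21, n22, hv]
    generalize tan (z 1) = u at *
    generalize sin (2 * z 0) = σ at *
    generalize cos (2 * z 0) = κ at *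
    generalize hs a b c d (z 0) = h at *
    generalize hs1 a b c d (z 0) = h' at *
    field_simp
    ring

theorem isPoisson_of_nice {Pv : (Fin 4 → ℝ) → Matrix (Fin 4) (Fin 4) ℝ} (a b c d t : ℝ)
    (h : ∀ z ∈ Dom, Pv z = nice a b c d t z) : IsPoissonOn Pv Dom := by
  intro z hz i j k
  have := jac_congr (Filter.Eventually.mono (Dom_nhds hz) h) i j k
  exact this.trans (jac_nice a b c d t hz i j k)

/-! ## The traces -/

theorem Pcan_inv : Pcan⁻¹ = !![0, 0, -1, 0; 0, 0, 0, -1; 1, 0, 0, 0; 0, 1, 0, 0] := by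
  apply Matrix.inv_eq_right_inv
  unfold Pcan
  ext i j
  fin_cases i <;> fin_cases j <;> simp [Matrix.mul_apply, Fin.sum_univ_four]

noncomputable def nH1 (a b c d : ℝ) (z : Fin 4 → ℝ) : ℝ := eB a b c d z + eE a b c d z

noncomputable def nH2 (a b c d : ℝ) (z : Fin 4 → ℝ) : ℝ :=
  1 / 2 * (eB a b c d z * eB a b c d z + eE a b c d z * eE a b c d z)
    + eC d z * eD a b c d z + eA z * eF a b c d z

theorem Hcal1_eq (a b c d : ℝ) (x22 : ℝ → ℝ) {z : Fin 4 → ℝ} (hz : z ∈ Dom) :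
    Hcal1 a b c d x22 z = nH1 a b c d z := by
  unfold Hcal1 Nrec nH1
  rw [piNew_eq a b c d x22 hz, Pcan_inv]
  simp [skew, Matrix.trace, Matrix.mul_apply, Fin.sum_univ_four]
  ring

theorem Hcal2_eq (a b c d : ℝ) (x22 : ℝ → ℝ) {z : Fin 4 → ℝ} (hz : z ∈ Dom) :
    Hcal2 a b c d x22 z = nH2 a b c d z := by
  unfold Hcal2 Nrec nH2
  rw [piNew_eq a b c d x22 hz, Pcan_inv]
  simp [skew, Matrix.trace, Matrix.mul_apply, Fin.sum_univ_four]
  ring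

theorem involution (a b c d : ℝ) (x22 : ℝ → ℝ) {z : Fin 4 → ℝ} (hz : z ∈ Dom) :
    pb (Hcal1 a b c d x22) (Hcal2 a b c d x22) z = 0 ∧
      pbiv (piNew a b c d x22) (Hcal1 a b c d x22) (Hcal2 a b c d x22) z = 0 := by
  obtain ⟨h1, h2, h3, h4⟩ := Dom_ne hz
  have hσ := sin2_ne h1 h2
  have hk : (1 : ℝ) + tan (z 1) ^ 2 ≠ 0 := by positivity
  have hv := cossq_rel hz
  have A := pd_eA hz
  have B := pd_eB a b c d hz
  have C := pd_eC d hz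
  have D : HasPD (eD a b c d) z _ := pd_n21 a b c d hz
  have E := pd_eE a b c d hz
  have F := pd_eF a b c d hz
  have H1 : HasPD (nH1 a b c d) z _ := B.add E
  have H2 : HasPD (nH2 a b c d) z _ :=
    ((((B.mul B).add (E.mul E)).cmul (1 / 2)).add (C.mul D)).add (A.mul F)
  have G1 := (H1.congr ((Dom_nhds hz).mono fun w hw => Hcal1_eq a b c d x22 hw)).pd_eq
  have G2 := (H2.congr ((Dom_nhds hz).mono fun w hw => Hcal2_eq a b c d x22 hw)).pd_eq
  constructor
  · simp only [pb, G1, G2]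
    simp [-mul_eq_mul_left_iff, -mul_eq_mul_right_iff]
    simp only [eA, eB, eC, eD, eE, eF, eG, n11, n12, n21, n22, hv]
    generalize tan (z 1) = u at *
    generalize sin (2 * z 0) = σ at *
    generalize cos (2 * z 0) = κ at *
    generalize hs a b c d (z 0) = h at *
    generalize hs1 a b c d (z 0) = h' at *
    field_simp
    ring
  · simp only [pbiv, G1, G2, piNew_eq a b c d x22 hz]
    simp [skew, Fin.sum_univ_four, -mul_eq_mul_left_iff, -mul_eq_mul_right_iff]
    simp only [eA, eB, eC, eD, eE, eF, eG, n11, n12, n21, n22, hv]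
    generalize tan (z 1) = u at *
    generalize sin (2 * z 0) = σ at *
    generalize cos (2 * z 0) = κ at *
    generalize hs a b c d (z 0) = h at *
    generalize hs1 a b c d (z 0) = h' at *
    field_simp
    ring

theorem statement19 (a b c d : ℝ) (x22 : ℝ → ℝ) (hx22 : ContDiff ℝ (⊤ : ℕ∞) x22) :
    (IsPoissonOn (piNew a b c d x22)
      {z | sin (z 0) * cos (z 0) * sin (z 1) * cos (z 1) ≠ 0} ∧
    IsPoissonOn (fun z => Pcan + piNew a b c d x22 z)
      {z | sin (z 0) * cos (z 0) * sin (z 1) * cos (z 1) ≠ 0}) ∧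
    ∀ z : Fin 4 → ℝ, sin (z 0) * cos (z 0) * sin (z 1) * cos (z 1) ≠ 0 →
      pb (Hcal1 a b c d x22) (Hcal2 a b c d x22) z = 0 ∧
      pbiv (piNew a b c d x22) (Hcal1 a b c d x22) (Hcal2 a b c d x22) z = 0 := by
  refine ⟨⟨?_, ?_⟩, fun z hz => involution a b c d x22 hz⟩
  · refine isPoisson_of_nice a b c d 0 fun z hz => ?_
    rw [piNew_eq a b c d x22 hz, nice, add_zero, add_zero]
  · refine isPoisson_of_nice a b c d 1 fun z hz => ?_
    rw [piNew_eq a b c d x22 hz, nice]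
    unfold Pcan skew
    ext i j
    fin_cases i <;> fin_cases j <;> simp <;> ring
end
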